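/- For every n ≥ 0, the number of nonzero entries on row n of Pascal's triangle modulo 27 satisfies, as an identity in the rational numbers, a_{27}(n) = 2^{|n|_1} · 3^{|n|_2} · (1 + (1/2)|n|_{10} + (7/32)|n|_{11} + (4/9)|n|_{20} + (5/18)|n|_{21} + 3|n|_{100} + (3/4)|n|_{101} + (3/4)|n|_{110} + (3/16)|n|_{111} + (1/3)|n|_{120} + (1/12)|n|_{121} + 4|n|_{200} + |n|_{201} + |n|_{210} + (1/4)|n|_{211} + (4/9)|n|_{220} + (1/9)|n|_{221} + (1/2)|n|_{10}^2 + (1/4)|n|_{10}|n|_{11} + (4/3)|n|_{10}|n|_{20} + (1/3)|n|_{10}|n|_{21} + (1/32)|n|_{11}^2 + (1/3)|n|_{11}|n|_{20} + (1/12)|n|_{11}|n|_{21} + (8/9)|n|_{20}^2 + (4/9)|n|_{20}|n|_{21} + (1/18)|n|_{21}^2), where subword counts are taken in the base-3 representation of n. -/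

import Mathlib

/-- The number of integers `0 ≤ m ≤ n` such that `C(n,m)` is not divisible by `k`,
i.e. the number of nonzero entries on row `n` of Pascal's triangle modulo `k`. -/
def rowCount (k n : ℕ) : ℕ :=
  ((Finset.range (n + 1)).filter fun m => ¬ k ∣ n.choose m).card

/-- The number of borrows when subtracting `m` from `n` in base `b` (for `m ≤ n`):
the number of indices `i ≥ 0` with `m mod b^(i+1) > n mod b^(i+1)`. -/
def borrowCount (b n m : ℕ) : ℕ :=
  ((Finset.range (Nat.digits b n).length).filter fun i => n % b ^ (i + 1) < m % b ^ (i + 1)).card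

/-- `A_n(β)`: the number of `0 ≤ m ≤ n` with exactly `β` borrows
when subtracting `m` from `n` in base `b`. -/
def borrowA (b n β : ℕ) : ℕ :=
  ((Finset.range (n + 1)).filter fun m => borrowCount b n m = β).card

/-- `B_n(β)` with respect to `L` digit positions: the number of `n < m ≤ b^L - 1` such that
exactly `β` of the indices `0 ≤ i ≤ L - 1` satisfy `m mod b^(i+1) > n mod b^(i+1)`. -/
def borrowB (b L n β : ℕ) : ℕ :=
  ((Finset.Ioc n (b ^ L - 1)).filter fun m =>
    ((Finset.range L).filter fun i => n % b ^ (i + 1) < m % b ^ (i + 1)).card = β).card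

/-- The base-`b` digit string of `n`, most significant digit first (empty for `n = 0`). -/
def wordOf (b n : ℕ) : List ℕ := (Nat.digits b n).reverse

/-- `|n|_w`: the number of occurrences of `w` as a contiguous subword of the
base-`b` digit string of `n`. -/
def subwordCount (b n : ℕ) (w : List ℕ) : ℕ :=
  ((Finset.range ((wordOf b n).length + 1 - w.length)).filter fun s =>
    ((wordOf b n).drop s).take w.length = w).card

/-- `c(w_k ⋯ w_0)` for a word `w = [w_k, …, w_0]` (most significant letter first):
`(w_k/(w_k+1)) · (∏_{h=1}^{k−1} (b−w_{k−h})/(w_{k−h}+1)) · (b−w_0−1)/(w_0+1)`. -/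
def cword (b : ℕ) (w : List ℕ) : ℚ :=
  ((w.getD 0 0 : ℚ) / ((w.getD 0 0 : ℚ) + 1)) *
    (∏ h ∈ Finset.Ico 1 (w.length - 1),
      ((b : ℚ) - (w.getD h 0 : ℚ)) / ((w.getD h 0 : ℚ) + 1)) *
    (((b : ℚ) - (w.getD (w.length - 1) 0 : ℚ) - 1) / ((w.getD (w.length - 1) 0 : ℚ) + 1))

/-- The sum `Σ c(v)c(w)⋯c(z)` over all sets of pairwise nonoverlapping contiguous subwords
of `W` (identified by their position intervals: a pair `(s, len)` denotes the subword
occupying positions `s, …, s+len-1`) whose multiset of lengths equals `P`. -/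
def nonoverlapSum (b : ℕ) (W : List ℕ) (P : Multiset ℕ) : ℚ :=
  ∑ S ∈ ((Finset.range W.length ×ˢ Finset.Icc 1 W.length).powerset.filter fun S =>
      Multiset.map Prod.snd S.val = P ∧
      (∀ q ∈ S, q.1 + q.2 ≤ W.length) ∧
      (∀ q ∈ S, ∀ r ∈ S, q ≠ r → q.1 + q.2 ≤ r.1 ∨ r.1 + r.2 ≤ q.1)),
    ∏ q ∈ S, cword b ((W.drop q.1).take q.2)

/-!
Let `v` be the `p`-adic valuation and let `d`, `e` be base-`p` digits. By Legendre's formula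
`v (C(pn + d, pm + e))` equals `v (C(n, m))` if `e ≤ d` (no borrow), and
`1 + v ((n - m) * C(n, m))` if `d < e` (borrow). The numbers `(n - m) * C(n, m)` obey an analogous
rule, so the two row counts modulo prime powers satisfy a linear recursion in the last digit of `n`.

Divide both counts modulo `p ^ k` by `∏ (nᵢ + 1)`, calling the results `a_k` and `b_k`, and let `d`,
`e`, `f` be the last three digits of `n`, starting from the least significant one. Unrolling the
recursion from `a_1 = 1` shows that removing the digit `d` changes `a_3` by
`c(ed) * a_2(n / p²) + c(fed)`, where `a_2 = 1 + ∑ c(xy) |n|_{xy}`. Summing up gives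
`a_3 = 1 + S + T + Q`, with `S` and `T` the sums of `c` over the two- and three-letter subwords and
`Q` the sum of `c(u) c(v)` over nonoverlapping pairs of two-letter subwords. Finally,
`Q = (S² - ∑ c(u)²) / 2 - ∑ c(fe) c(ed)`, because two distinct overlapping two-letter subwords `fe`
and `ed` come from a three-letter subword `fed`.
-/

namespace PascalRow

open Finset
open scoped Nat

section Valuation

variable {p : ℕ} [Fact p.Prime] {n m d e : ℕ}

lemma padicValNat_factorial_mul_add_digit (n : ℕ) (hd : d < p) :
    padicValNat p (p * n + d)! = padicValNat p n ! + n := by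
  rw [padicValNat_factorial_mul_add n hd, padicValNat_factorial_mul]

lemma padicValNat_choose_add_factorials (h : m ≤ n) :
    padicValNat p (n.choose m) + padicValNat p m ! + padicValNat p (n - m)! =
      padicValNat p n ! := by
  have hchoose : n.choose m ≠ 0 := Nat.choose_ne_zero h
  rw [← padicValNat.mul hchoose m.factorial_ne_zero,
    ← padicValNat.mul (mul_ne_zero hchoose m.factorial_ne_zero) (n - m).factorial_ne_zero,
    Nat.choose_mul_factorial_mul_factorial h]

lemma padicValNat_choose_of_digit_le (h : m ≤ n) (hed : e ≤ d) (hd : d < p) :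
    padicValNat p ((p * n + d).choose (p * m + e)) = padicValNat p (n.choose m) := by
  obtain ⟨r, rfl⟩ := Nat.exists_eq_add_of_le h
  have hdiff : p * (m + r) + d - (p * m + e) = p * r + (d - e) := by rw [mul_add]; omega
  have hbig := padicValNat_choose_add_factorials (p := p)
    (show p * m + e ≤ p * (m + r) + d by rw [mul_add]; omega)
  have hsmall := padicValNat_choose_add_factorials (p := p) h
  rw [hdiff, padicValNat_factorial_mul_add_digit _ hd,
    padicValNat_factorial_mul_add_digit _ (by omega),
    padicValNat_factorial_mul_add_digit _ (by omega)] at hbig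
  rw [Nat.add_sub_cancel_left] at hsmall
  omega

lemma padicValNat_choose_of_digit_lt (h : m < n) (hde : d < e) (he : e < p) :
    padicValNat p ((p * n + d).choose (p * m + e)) =
      padicValNat p ((n - m) * n.choose m) + 1 := by
  obtain ⟨r, rfl⟩ := Nat.exists_eq_add_of_lt h
  have hdiff : p * (m + r + 1) + d - (p * m + e) = p * r + (p + d - e) := by
    rw [mul_add, mul_add]; omega
  have hbig := padicValNat_choose_add_factorials (p := p)
    (show p * m + e ≤ p * (m + r + 1) + d by rw [mul_add, mul_add]; omega)
  have hsmall := padicValNat_choose_add_factorials (p := p) h.le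
  rw [hdiff, padicValNat_factorial_mul_add_digit _ he,
    padicValNat_factorial_mul_add_digit _ (by omega),
    padicValNat_factorial_mul_add_digit _ (by omega)] at hbig
  rw [show m + r + 1 - m = r + 1 by omega, Nat.factorial_succ,
    padicValNat.mul r.succ_ne_zero r.factorial_ne_zero] at hsmall
  rw [show m + r + 1 - m = r + 1 by omega,
    padicValNat.mul r.succ_ne_zero (Nat.choose_ne_zero h.le)]
  omega

end Valuation

section Divisibility

variable {p : ℕ} [Fact p.Prime] {d e : ℕ} (k n m : ℕ)

lemma pow_dvd_choose_iff_of_digit_le (hed : e ≤ d) (hd : d < p) :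
    p ^ k ∣ (p * n + d).choose (p * m + e) ↔ p ^ k ∣ n.choose m := by
  rcases le_or_gt m n with h | h
  · have hle : p * m + e ≤ p * n + d := by gcongr
    rw [padicValNat_dvd_iff_le (Nat.choose_ne_zero hle),
      padicValNat_dvd_iff_le (Nat.choose_ne_zero h), padicValNat_choose_of_digit_le h hed hd]
  · have hlt : p * n + d < p * m + e := by nlinarith
    simp only [Nat.choose_eq_zero_of_lt, h, hlt]

lemma pow_succ_dvd_choose_iff_of_digit_lt (hde : d < e) (he : e < p) :
    p ^ (k + 1) ∣ (p * n + d).choose (p * m + e) ↔ p ^ k ∣ (n - m) * n.choose m := by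
  rcases lt_or_ge m n with h | h
  · have hle : p * m + e ≤ p * n + d := by nlinarith
    have hne : (n - m) * n.choose m ≠ 0 :=
      mul_ne_zero (Nat.sub_ne_zero_of_lt h) (Nat.choose_ne_zero h.le)
    rw [padicValNat_dvd_iff_le (Nat.choose_ne_zero hle), padicValNat_dvd_iff_le hne,
      padicValNat_choose_of_digit_lt h hde he, Nat.add_le_add_iff_right]
  · have hlt : p * n + d < p * m + e := by nlinarith
    simp [Nat.choose_eq_zero_of_lt hlt, Nat.sub_eq_zero_of_le h]

lemma coprime_pow_mul_add_digit (hd₀ : d ≠ 0) (hd : d < p) : (p ^ k).Coprime (p * n + d) := by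
  apply Nat.Coprime.pow_left
  simpa using (Nat.coprime_of_lt_prime hd₀ hd Fact.out)

lemma pow_dvd_sub_mul_choose_iff_of_digit_lt (hed : e < d) (hd : d < p) :
    p ^ k ∣ (p * n + d - (p * m + e)) * (p * n + d).choose (p * m + e) ↔
      p ^ k ∣ n.choose m := by
  rcases le_or_gt m n with h | h
  · have hdiff : p * n + d - (p * m + e) = p * (n - m) + (d - e) := by
      rw [Nat.mul_sub]; have := Nat.mul_le_mul_left p h; omega
    rw [hdiff, (coprime_pow_mul_add_digit k _ (by omega) (by omega)).dvd_mul_left,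
      pow_dvd_choose_iff_of_digit_le k n m hed.le hd]
  · have hlt : p * n + d < p * m + e := by nlinarith
    simp [Nat.choose_eq_zero_of_lt, h, hlt]

lemma pow_succ_dvd_sub_mul_choose_iff_of_digit_eq (hd : d < p) :
    p ^ (k + 1) ∣ (p * n + d - (p * m + d)) * (p * n + d).choose (p * m + d) ↔
      p ^ k ∣ (n - m) * n.choose m := by
  have hdiff : p * n + d - (p * m + d) = p * (n - m) := by
    rw [Nat.add_sub_add_right, Nat.mul_sub]
  rw [hdiff, mul_assoc, pow_succ', Nat.mul_dvd_mul_iff_left (by omega)]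
  rcases lt_or_ge m n with h | h
  · have hsub : n - m ≠ 0 := Nat.sub_ne_zero_of_lt h
    have hbig : (p * n + d).choose (p * m + d) ≠ 0 := Nat.choose_ne_zero (by gcongr)
    have hsmall : n.choose m ≠ 0 := Nat.choose_ne_zero h.le
    rw [padicValNat_dvd_iff_le (mul_ne_zero hsub hbig),
      padicValNat_dvd_iff_le (mul_ne_zero hsub hsmall), padicValNat.mul hsub hbig,
      padicValNat.mul hsub hsmall, padicValNat_choose_of_digit_le h.le le_rfl hd]
  · simp [Nat.sub_eq_zero_of_le h]

lemma pow_succ_dvd_sub_mul_choose_iff_of_digit_le (hde : d ≤ e) (he : e < p) :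
    p ^ (k + 1) ∣ (p * n + d - (p * m + e)) * (p * n + d).choose (p * m + e) ↔
      p ^ k ∣ (n - m) * n.choose m := by
  rcases hde.eq_or_lt with rfl | hlt
  · exact pow_succ_dvd_sub_mul_choose_iff_of_digit_eq k n m he
  rcases lt_or_ge m n with h | h
  · have hdiff : p * n + d - (p * m + e) = p * (n - m - 1) + (p + d - e) := by
      obtain ⟨r, rfl⟩ := Nat.exists_eq_add_of_lt h
      rw [show m + r + 1 - m - 1 = r by omega, mul_add, mul_add]; omega
    rw [hdiff, (coprime_pow_mul_add_digit _ _ (by omega) (by omega)).dvd_mul_left,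
      pow_succ_dvd_choose_iff_of_digit_lt k n m hlt he]
  · have hzero : p * n + d < p * m + e := by nlinarith
    simp [Nat.choose_eq_zero_of_lt hzero, Nat.sub_eq_zero_of_le h]

end Divisibility

section Counting

lemma card_filter_range_mul_of_digit_split {p t : ℕ} (ht : t ≤ p) {P Q R : ℕ → Prop}
    [DecidablePred P] [DecidablePred Q] [DecidablePred R]
    (hlow : ∀ m, ∀ e < t, P (p * m + e) ↔ Q m)
    (hhigh : ∀ m e, t ≤ e → e < p → (P (p * m + e) ↔ R m)) (N : ℕ) :
    #{i ∈ range (p * N) | P i} = t * #{m ∈ range N | Q m} + (p - t) * #{m ∈ range N | R m} := by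
  have hblock (m : ℕ) : ∑ e ∈ range p, (if P (p * m + e) then 1 else 0) =
      t * (if Q m then 1 else 0) + (p - t) * (if R m then 1 else 0) := by
    obtain ⟨s, rfl⟩ := Nat.exists_eq_add_of_le ht
    rw [sum_range_add, Nat.add_sub_cancel_left]
    congr 1
    · rw [sum_congr rfl fun e he => if_congr (hlow m e (mem_range.1 he)) rfl rfl]
      simp
    · rw [sum_congr rfl fun e he => if_congr
        (hhigh m (t + e) (by omega) (by have := mem_range.1 he; omega)) rfl rfl]
      simp
  simp only [card_filter]
  induction N with
  | zero => simp
  | succ N ih =>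
    rw [mul_add_one, sum_range_add, ih, hblock, sum_range_succ, sum_range_succ]
    ring

lemma card_filter_range_eq_of_forall_not {M N : ℕ} (h : M ≤ N) {P : ℕ → Prop} [DecidablePred P]
    (hP : ∀ m, M ≤ m → ¬ P m) : #{m ∈ range M | P m} = #{m ∈ range N | P m} := by
  refine congrArg card (Finset.ext fun m => ?_)
  simp only [mem_filter, mem_range]
  exact ⟨fun ⟨hm, hPm⟩ => ⟨hm.trans_le h, hPm⟩,
    fun ⟨_, hPm⟩ => ⟨not_le.1 fun hm => hP m hm hPm, hPm⟩⟩

/-- The number of `0 ≤ m ≤ n` with `k ∤ (n - m) * C(n, m)`. Up to a factor prime to `p`, the number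
`p * (n - m) * C(n, m)` is the binomial coefficient `C(pn + d, pm + e)` with digits `d < e < p`, so
for `k` a power of `p` this counts the entries of row `n` reached by a borrow. -/
def borrowRowCount (k n : ℕ) : ℕ :=
  #{m ∈ range (n + 1) | ¬ k ∣ (n - m) * n.choose m}

lemma rowCount_eq_card_range (k : ℕ) {n N : ℕ} (h : n < N) :
    rowCount k n = #{m ∈ range N | ¬ k ∣ n.choose m} :=
  card_filter_range_eq_of_forall_not h fun m hm => by simp [Nat.choose_eq_zero_of_lt hm]

lemma borrowRowCount_eq_card_range (k : ℕ) {n N : ℕ} (h : n < N) :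
    borrowRowCount k n = #{m ∈ range N | ¬ k ∣ (n - m) * n.choose m} :=
  card_filter_range_eq_of_forall_not h fun m hm => by simp [Nat.choose_eq_zero_of_lt hm]

lemma borrowRowCount_one (n : ℕ) : borrowRowCount 1 n = 0 := by
  simp [borrowRowCount]

lemma rowCount_zero {k : ℕ} (hk : k ≠ 1) : rowCount k 0 = 1 := by
  simp [rowCount, filter_singleton, hk]

variable (p : ℕ) [Fact p.Prime] (k n : ℕ)

lemma rowCount_pow_succ :
    rowCount (p ^ (k + 1)) n = (n % p + 1) * rowCount (p ^ (k + 1)) (n / p) +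
      (p - (n % p + 1)) * borrowRowCount (p ^ k) (n / p) := by
  have hd : n % p < p := Nat.mod_lt n (Fact.out : p.Prime).pos
  rw [rowCount_eq_card_range _ (Nat.lt_mul_div_succ n (Fact.out : p.Prime).pos)]
  refine card_filter_range_mul_of_digit_split hd (fun m e he => ?_) (fun m e hde he => ?_) _
  · conv_lhs => rw [← Nat.div_add_mod n p]
    exact not_congr (pow_dvd_choose_iff_of_digit_le _ _ _ (by omega) hd)
  · conv_lhs => rw [← Nat.div_add_mod n p]
    exact not_congr (pow_succ_dvd_choose_iff_of_digit_lt _ _ _ hde he)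

lemma borrowRowCount_pow_succ :
    borrowRowCount (p ^ (k + 1)) n = n % p * rowCount (p ^ (k + 1)) (n / p) +
      (p - n % p) * borrowRowCount (p ^ k) (n / p) := by
  have hd : n % p < p := Nat.mod_lt n (Fact.out : p.Prime).pos
  rw [borrowRowCount_eq_card_range _ (Nat.lt_mul_div_succ n (Fact.out : p.Prime).pos)]
  refine card_filter_range_mul_of_digit_split hd.le (fun m e he => ?_) (fun m e hde he => ?_) _
  · conv_lhs => rw [← Nat.div_add_mod n p]
    exact not_congr (pow_dvd_sub_mul_choose_iff_of_digit_lt _ _ _ he hd)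
  · conv_lhs => rw [← Nat.div_add_mod n p]
    exact not_congr (pow_succ_dvd_sub_mul_choose_iff_of_digit_le _ _ _ hde he)

end Counting

section Subwords

lemma card_windows_concat {α : Type*} [DecidableEq α] (W w : List α) (d z : α) :
    #{s ∈ range ((W ++ [d]).length + 1 - (w ++ [z]).length) |
        ((W ++ [d]).drop s).take (w ++ [z]).length = w ++ [z]} =
      #{s ∈ range (W.length + 1 - (w ++ [z]).length) |
        (W.drop s).take (w ++ [z]).length = w ++ [z]} +
      if w <:+ W ∧ z = d then 1 else 0 := by
  simp only [List.length_append, List.length_singleton, Nat.add_sub_add_right, card_filter]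
  rcases le_or_gt w.length W.length with hle | hlt
  · rw [Nat.sub_add_comm hle, sum_range_succ]
    congr 1
    · refine sum_congr rfl fun s hs => ?_
      rw [mem_range] at hs
      rw [List.drop_append_of_le_length (by omega),
        List.take_append_of_le_length (by rw [List.length_drop]; omega)]
    · rw [List.drop_append_of_le_length (by omega), List.take_of_length_le (by simp; omega)]
      refine if_congr ?_ rfl rfl
      rw [List.append_singleton_inj, List.suffix_iff_eq_drop, eq_comm, eq_comm (a := z)]
  · rw [if_neg fun h => hlt.not_ge h.1.length_le, show W.length + 1 - w.length = 0 by omega,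
      show W.length - w.length = 0 by omega]
    simp

lemma concat_suffix_concat_iff {α : Type*} {W w : List α} {d z : α} :
    w ++ [z] <:+ W ++ [d] ↔ w <:+ W ∧ z = d := by
  simp only [List.IsSuffix, ← List.append_assoc, List.append_singleton_inj, exists_and_right]

lemma wordOf_zero (b : ℕ) : wordOf b 0 = [] := by
  simp [wordOf]

lemma subwordCount_zero (b : ℕ) {w : List ℕ} (hw : w ≠ []) : subwordCount b 0 w = 0 := by
  simp [subwordCount, wordOf_zero, hw.symm]

variable {b : ℕ}

lemma wordOf_eq_concat (hb : 1 < b) {n : ℕ} (hn : n ≠ 0) :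
    wordOf b n = wordOf b (n / b) ++ [n % b] := by
  simp [wordOf, Nat.digits_eq_cons_digits_div hb hn]

-- The word of `0` is empty, so `[0]` is never a suffix of it although `0 % b = 0`.
lemma concat_suffix_wordOf_iff (hb : 1 < b) {w : List ℕ} {z : ℕ} (h : w ≠ [] ∨ z ≠ 0) (n : ℕ) :
    w ++ [z] <:+ wordOf b n ↔ w <:+ wordOf b (n / b) ∧ z = n % b := by
  rcases eq_or_ne n 0 with rfl | hn
  · simpa [wordOf_zero, imp_iff_not_or] using h
  · rw [wordOf_eq_concat hb hn, concat_suffix_concat_iff]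

lemma subwordCount_concat (hb : 1 < b) {w : List ℕ} {z : ℕ} (h : w ≠ [] ∨ z ≠ 0) (n : ℕ) :
    subwordCount b n (w ++ [z]) = subwordCount b (n / b) (w ++ [z]) +
      if w <:+ wordOf b (n / b) ∧ z = n % b then 1 else 0 := by
  rcases eq_or_ne n 0 with rfl | hn
  · simpa [wordOf_zero, imp_iff_not_or] using h
  · unfold subwordCount
    rw [wordOf_eq_concat hb hn, card_windows_concat]

variable {x : ℕ}

lemma singleton_suffix_wordOf_iff (hb : 1 < b) (hx : x ≠ 0) (n : ℕ) :
    [x] <:+ wordOf b n ↔ x = n % b := by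
  simpa using concat_suffix_wordOf_iff hb (w := []) (.inr hx) n

lemma pair_suffix_wordOf_iff (hb : 1 < b) (hx : x ≠ 0) (y n : ℕ) :
    [x, y] <:+ wordOf b n ↔ x = n / b % b ∧ y = n % b := by
  rw [← singleton_suffix_wordOf_iff hb hx]
  exact concat_suffix_wordOf_iff hb (.inl (List.cons_ne_nil x [])) n

lemma subwordCount_singleton (hb : 1 < b) (hx : x ≠ 0) (n : ℕ) :
    subwordCount b n [x] = subwordCount b (n / b) [x] + if x = n % b then 1 else 0 := by
  simpa using subwordCount_concat hb (w := []) (.inr hx) n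

lemma subwordCount_pair (hb : 1 < b) (hx : x ≠ 0) (y n : ℕ) :
    subwordCount b n [x, y] = subwordCount b (n / b) [x, y] +
      if x = n / b % b ∧ y = n % b then 1 else 0 := by
  simp only [← singleton_suffix_wordOf_iff hb hx]
  exact subwordCount_concat hb (.inl (List.cons_ne_nil x [])) n

lemma subwordCount_triple (hb : 1 < b) (hx : x ≠ 0) (y z n : ℕ) :
    subwordCount b n [x, y, z] = subwordCount b (n / b) [x, y, z] +
      if (x = n / b / b % b ∧ y = n / b % b) ∧ z = n % b then 1 else 0 := by
  simp only [← pair_suffix_wordOf_iff hb hx]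
  exact subwordCount_concat hb (.inl (List.cons_ne_nil x [y])) n

end Subwords

section DigitSums

/-- `∏ (nᵢ + 1)` over the base-`b` digits `nᵢ` of `n`, with equal digits grouped together. -/
def digitSuccProd (b n : ℕ) : ℕ :=
  ∏ x ∈ range b, (x + 1) ^ subwordCount b n [x]

/-- The sum of `g` over all occurrences of two-letter subwords in the base-`b` word of `n`. -/
def pairSum (b : ℕ) (g : ℕ → ℕ → ℚ) (n : ℕ) : ℚ :=
  ∑ x ∈ range b, ∑ y ∈ range b, g x y * subwordCount b n [x, y]

/-- The sum of `g` over all occurrences of three-letter subwords in the base-`b` word of `n`. -/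
def tripleSum (b : ℕ) (g : ℕ → ℕ → ℕ → ℚ) (n : ℕ) : ℚ :=
  ∑ x ∈ range b, ∑ y ∈ range b, ∑ z ∈ range b, g x y z * subwordCount b n [x, y, z]

lemma digitSuccProd_zero (b : ℕ) : digitSuccProd b 0 = 1 := by
  simp [digitSuccProd, subwordCount_zero]

lemma pairSum_zero (b : ℕ) (g : ℕ → ℕ → ℚ) : pairSum b g 0 = 0 := by
  simp [pairSum, subwordCount_zero]

lemma tripleSum_zero (b : ℕ) (g : ℕ → ℕ → ℕ → ℚ) : tripleSum b g 0 = 0 := by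
  simp [tripleSum, subwordCount_zero]

variable {b : ℕ} (n : ℕ)

lemma digitSuccProd_eq_mul_div (hb : 1 < b) :
    digitSuccProd b n = (n % b + 1) * digitSuccProd b (n / b) := by
  have hfactor (x : ℕ) : (x + 1) ^ subwordCount b n [x] =
      (if x = n % b then x + 1 else 1) * (x + 1) ^ subwordCount b (n / b) [x] := by
    rcases eq_or_ne x 0 with rfl | hx
    · simp
    · rw [subwordCount_singleton hb hx]
      split_ifs <;> ring
  simp only [digitSuccProd, hfactor, prod_mul_distrib, prod_ite_eq', mem_range,
    Nat.mod_lt n (by omega : b > 0), if_true]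

lemma pairSum_eq_add_div (hb : 1 < b) {g : ℕ → ℕ → ℚ} (hg : ∀ y, g 0 y = 0) :
    pairSum b g n = pairSum b g (n / b) + g (n / b % b) (n % b) := by
  have hterm (x y : ℕ) : g x y * subwordCount b n [x, y] =
      g x y * subwordCount b (n / b) [x, y] +
        if x = n / b % b then if y = n % b then g x y else 0 else 0 := by
    rcases eq_or_ne x 0 with rfl | hx
    · simp [hg]
    · rw [subwordCount_pair hb hx, ite_and]
      push_cast
      split_ifs <;> ring
  have hmod (a : ℕ) : a % b < b := Nat.mod_lt a (by omega)
  simp [pairSum, hterm, sum_add_distrib, sum_ite_irrel, hmod]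

lemma tripleSum_eq_add_div (hb : 1 < b) {g : ℕ → ℕ → ℕ → ℚ} (hg : ∀ y z, g 0 y z = 0) :
    tripleSum b g n = tripleSum b g (n / b) + g (n / b / b % b) (n / b % b) (n % b) := by
  have hterm (x y z : ℕ) : g x y z * subwordCount b n [x, y, z] =
      g x y z * subwordCount b (n / b) [x, y, z] +
        if x = n / b / b % b then if y = n / b % b then if z = n % b then g x y z
          else 0 else 0 else 0 := by
    rcases eq_or_ne x 0 with rfl | hx
    · simp [hg]
    · rw [subwordCount_triple hb hx, ite_and, ite_and]
      push_cast
      split_ifs <;> ring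
  have hmod (a : ℕ) : a % b < b := Nat.mod_lt a (by omega)
  simp [tripleSum, hterm, sum_add_distrib, sum_ite_irrel, hmod]

end DigitSums

section PrimePowers

lemma cword_pair (b x y : ℕ) : cword b [x, y] = x / (x + 1) * ((b - y - 1) / (y + 1)) := by
  simp [cword]

lemma cword_triple (b x y z : ℕ) :
    cword b [x, y, z] = x / (x + 1) * ((b - y) / (y + 1)) * ((b - z - 1) / (z + 1)) := by
  simp [cword]

lemma div_induction {b : ℕ} (hb : 1 < b) {P : ℕ → Prop} (zero : P 0)
    (step : ∀ n, P (n / b) → P n) (n : ℕ) : P n := by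
  induction n using Nat.strong_induction_on with
  | _ n ih =>
    rcases eq_or_ne n 0 with rfl | hn
    · exact zero
    · exact step n (ih _ (Nat.div_lt_self (by omega) hb))

variable (p : ℕ) [Fact p.Prime] (n : ℕ)

lemma rowCount_pow_succ_cast (k : ℕ) :
    (rowCount (p ^ (k + 1)) n : ℚ) = ((n % p : ℕ) + 1) * rowCount (p ^ (k + 1)) (n / p) +
      (p - (n % p : ℕ) - 1) * borrowRowCount (p ^ k) (n / p) := by
  have hd : n % p + 1 ≤ p := Nat.mod_lt n (Fact.out : p.Prime).pos
  rw [rowCount_pow_succ]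
  push_cast [Nat.cast_sub hd]
  ring

lemma borrowRowCount_pow_succ_cast (k : ℕ) :
    (borrowRowCount (p ^ (k + 1)) n : ℚ) = (n % p : ℕ) * rowCount (p ^ (k + 1)) (n / p) +
      (p - (n % p : ℕ)) * borrowRowCount (p ^ k) (n / p) := by
  rw [borrowRowCount_pow_succ]
  push_cast [Nat.cast_sub (Nat.mod_lt n (Fact.out : p.Prime).pos).le]
  rfl

theorem rowCount_prime : rowCount p n = digitSuccProd p n := by
  have hp : p.Prime := Fact.out
  induction n using div_induction hp.one_lt with
  | zero => rw [rowCount_zero hp.ne_one, digitSuccProd_zero]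
  | step n ih =>
    have hrow := rowCount_pow_succ p 0 n
    rw [zero_add, pow_one, pow_zero, borrowRowCount_one, mul_zero, add_zero] at hrow
    rw [hrow, ih, ← digitSuccProd_eq_mul_div n hp.one_lt]

lemma borrowRowCount_prime : borrowRowCount p n = n % p * digitSuccProd p (n / p) := by
  have hborrow := borrowRowCount_pow_succ p 0 n
  rwa [zero_add, pow_one, pow_zero, borrowRowCount_one, mul_zero, add_zero,
    rowCount_prime] at hborrow

theorem rowCount_prime_sq :
    (rowCount (p ^ 2) n : ℚ) =
      digitSuccProd p n * (1 + pairSum p (fun x y => cword p [x, y]) n) := by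
  have hp : p.Prime := Fact.out
  induction n using div_induction hp.one_lt with
  | zero => simp [rowCount_zero, hp.ne_one, digitSuccProd_zero, pairSum_zero]
  | step n ih =>
    rw [rowCount_pow_succ_cast, ih, pow_one, borrowRowCount_prime,
      pairSum_eq_add_div n hp.one_lt (by simp [cword_pair]),
      digitSuccProd_eq_mul_div n hp.one_lt, digitSuccProd_eq_mul_div (n / p) hp.one_lt, cword_pair]
    push_cast
    field_simp
    ring

lemma borrowRowCount_prime_sq :
    (borrowRowCount (p ^ 2) n : ℚ) =
      (n % p : ℕ) * (digitSuccProd p (n / p) *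
        (1 + pairSum p (fun x y => cword p [x, y]) (n / p))) +
      (p - (n % p : ℕ)) * ((n / p % p : ℕ) * digitSuccProd p (n / p / p)) := by
  rw [borrowRowCount_pow_succ_cast, rowCount_prime_sq, pow_one, borrowRowCount_prime]
  push_cast
  rfl

lemma rowCount_prime_cube_eq_add_div :
    (rowCount (p ^ 3) n : ℚ) = ((n % p : ℕ) + 1) * rowCount (p ^ 3) (n / p) +
      digitSuccProd p n *
        (cword p [n / p % p, n % p] *
            (1 + pairSum p (fun x y => cword p [x, y]) (n / p / p)) +
          cword p [n / p / p % p, n / p % p, n % p]) := by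
  have hp : 1 < p := (Fact.out : p.Prime).one_lt
  rw [rowCount_pow_succ_cast, borrowRowCount_prime_sq, digitSuccProd_eq_mul_div n hp,
    digitSuccProd_eq_mul_div (n / p) hp, digitSuccProd_eq_mul_div (n / p / p) hp,
    cword_pair, cword_triple]
  push_cast
  field_simp

end PrimePowers

end PascalRow

open PascalRow

theorem stmt17_general (p : ℕ) [Fact p.Prime] (n : ℕ) :
    (rowCount (p ^ 3) n : ℚ) = digitSuccProd p n *
      (1 + pairSum p (fun x y => cword p [x, y] - cword p [x, y] ^ 2 / 2) n +
        tripleSum p (fun x y z => cword p [x, y, z] - cword p [x, y] * cword p [y, z]) n +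
        pairSum p (fun x y => cword p [x, y]) n ^ 2 / 2) := by
  have hp : p.Prime := Fact.out
  induction n using div_induction hp.one_lt with
  | zero => simp [rowCount_zero, hp.ne_one, digitSuccProd_zero, pairSum_zero, tripleSum_zero]
  | step n ih =>
    have hpair (m : ℕ) := pairSum_eq_add_div m hp.one_lt (g := fun x y => cword p [x, y])
      (by simp [cword_pair])
    rw [rowCount_prime_cube_eq_add_div, ih, digitSuccProd_eq_mul_div n hp.one_lt,
      hpair n, hpair (n / p),
      pairSum_eq_add_div n hp.one_lt (g := fun x y => cword p [x, y] - cword p [x, y] ^ 2 / 2)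
        (by simp [cword_pair]),
      tripleSum_eq_add_div n hp.one_lt (by simp [cword_pair, cword_triple])]
    push_cast
    ring

/-- For every `n ≥ 0`, as an identity in the rational numbers, the formula for `a_{27}(n)` in
terms of base-3 subword counts. -/
theorem stmt17 (n : ℕ) :
    (rowCount 27 n : ℚ) =
      2 ^ subwordCount 3 n [1] * 3 ^ subwordCount 3 n [2] *
        (1 + (1 / 2) * (subwordCount 3 n [1, 0] : ℚ) + (7 / 32) * (subwordCount 3 n [1, 1] : ℚ) +
          (4 / 9) * (subwordCount 3 n [2, 0] : ℚ) + (5 / 18) * (subwordCount 3 n [2, 1] : ℚ) +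
          3 * (subwordCount 3 n [1, 0, 0] : ℚ) + (3 / 4) * (subwordCount 3 n [1, 0, 1] : ℚ) +
          (3 / 4) * (subwordCount 3 n [1, 1, 0] : ℚ) + (3 / 16) * (subwordCount 3 n [1, 1, 1] : ℚ) +
          (1 / 3) * (subwordCount 3 n [1, 2, 0] : ℚ) + (1 / 12) * (subwordCount 3 n [1, 2, 1] : ℚ) +
          4 * (subwordCount 3 n [2, 0, 0] : ℚ) + (subwordCount 3 n [2, 0, 1] : ℚ) +
          (subwordCount 3 n [2, 1, 0] : ℚ) + (1 / 4) * (subwordCount 3 n [2, 1, 1] : ℚ) +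
          (4 / 9) * (subwordCount 3 n [2, 2, 0] : ℚ) + (1 / 9) * (subwordCount 3 n [2, 2, 1] : ℚ) +
          (1 / 2) * (subwordCount 3 n [1, 0] : ℚ) ^ 2 +
          (1 / 4) * (subwordCount 3 n [1, 0] : ℚ) * (subwordCount 3 n [1, 1] : ℚ) +
          (4 / 3) * (subwordCount 3 n [1, 0] : ℚ) * (subwordCount 3 n [2, 0] : ℚ) +
          (1 / 3) * (subwordCount 3 n [1, 0] : ℚ) * (subwordCount 3 n [2, 1] : ℚ) +
          (1 / 32) * (subwordCount 3 n [1, 1] : ℚ) ^ 2 +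
          (1 / 3) * (subwordCount 3 n [1, 1] : ℚ) * (subwordCount 3 n [2, 0] : ℚ) +
          (1 / 12) * (subwordCount 3 n [1, 1] : ℚ) * (subwordCount 3 n [2, 1] : ℚ) +
          (8 / 9) * (subwordCount 3 n [2, 0] : ℚ) ^ 2 +
          (4 / 9) * (subwordCount 3 n [2, 0] : ℚ) * (subwordCount 3 n [2, 1] : ℚ) +
          (1 / 18) * (subwordCount 3 n [2, 1] : ℚ) ^ 2) := by
  have h := stmt17_general 3 n
  norm_num [digitSuccProd, pairSum, tripleSum, cword_pair, cword_triple, Finset.sum_range_succ,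
    Finset.prod_range_succ] at h
  linear_combination h
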